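/- Every Abelian Sandpile Model reaching a unique fixed point is equivalent to a simple Abelian Sandpile Model: for every ASM CFG(G,O) reaching a unique fixed point there exists a simple ASM CFG(G',O') reaching a unique fixed point whose configuration space is order-isomorphic to that of CFG(G,O). -/

import Mathlib

open Classical

section CFGdefs

variable {V : Type*}

/-- Out-degree of a vertex in a directed multigraph with edge multiplicities `E`. -/
noncomputable def outDeg (E : V → V → ℕ) (v : V) : ℕ := ∑ᶠ u, E v u

/-- A vertex is a sink if all its outgoing edges are loops. -/
def IsSink (E : V → V → ℕ) (v : V) : Prop := outDeg E v = E v v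

/-- A vertex is firable in configuration `c`. -/
def Firable (E : V → V → ℕ) (c : V → ℕ) (v : V) : Prop :=
  ¬ IsSink E v ∧ outDeg E v ≤ c v

/-- The result of firing vertex `v` in configuration `c`. -/
noncomputable def fire (E : V → V → ℕ) (c : V → ℕ) (v : V) : V → ℕ :=
  fun u => if u = v then c v - outDeg E v + E v v else c u + E v u

/-- The configuration obtained by firing a list of vertices in order. -/
noncomputable def fireList (E : V → V → ℕ) : (V → ℕ) → List V → (V → ℕ)
  | c, [] => c
  | c, v :: l => fireList E (fire E c v) l

/-- A list of vertices is a valid firing sequence from `c`. -/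
def ValidSeq (E : V → V → ℕ) : (V → ℕ) → List V → Prop
  | _, [] => True
  | c, v :: l => Firable E c v ∧ ValidSeq E (fire E c v) l

/-- `c'` is reachable from `c` by a finite sequence of firings. -/
def Reaches (E : V → V → ℕ) (c c' : V → ℕ) : Prop :=
  ∃ l : List V, ValidSeq E c l ∧ fireList E c l = c'

/-- A configuration with no firable vertex. -/
def FixedPt (E : V → V → ℕ) (c : V → ℕ) : Prop := ∀ v, ¬ Firable E c v

/-- The chip firing game `CFG(G,O)` reaches a unique fixed point. -/
def ReachesUFP (E : V → V → ℕ) (O : V → ℕ) : Prop :=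
  ∃ fp : V → ℕ, Reaches E O fp ∧ FixedPt E fp ∧ ∀ c, Reaches E O c → Reaches E c fp

/-- The game is simple: in every firing sequence from `O` to the fixed point,
each vertex fires at most once. -/
def SimpleCFG (E : V → V → ℕ) (O : V → ℕ) : Prop :=
  ∀ l : List V, ValidSeq E O l → FixedPt E (fireList E O l) → l.Nodup

/-- Single firing step from `c` to `c'` by firing vertex `v`. -/
def FireStep (E : V → V → ℕ) (c : V → ℕ) (v : V) (c' : V → ℕ) : Prop :=
  Firable E c v ∧ fire E c v = c'

/-- The partial order `L` is order-isomorphic to the configuration space of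
`CFG(G,O)` ordered by reachability. -/
def Generates (E : V → V → ℕ) (O : V → ℕ) (L : Type*) [PartialOrder L] : Prop :=
  ∃ f : L ≃ {c : V → ℕ // Reaches E O c},
    ∀ a b : L, a ≤ b ↔ Reaches E (f a).val (f b).val

/-- The support graph is connected (as an undirected graph). -/
def ConnectedG (E : V → V → ℕ) : Prop :=
  ∀ u v : V, Relation.ReflTransGen (fun a b => 0 < E a b ∨ 0 < E b a) u v

/-- The support graph together with its initial data is an Abelian Sandpile Model. -/
def IsASM (E : V → V → ℕ) : Prop :=
  ConnectedG E ∧ ∃ s : V, IsSink E s ∧ (∀ v, IsSink E v → v = s) ∧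
    ∀ v₁ v₂ : V, v₁ ≠ v₂ → v₁ ≠ s → v₂ ≠ s → E v₁ v₂ = E v₂ v₁

/-- The directed multigraph has no directed cycle. -/
def AcyclicG (E : V → V → ℕ) : Prop :=
  ∀ v : V, ¬ Relation.TransGen (fun a b => 0 < E a b) v v

end CFGdefs

/-- `L` is generated by some chip firing game reaching a unique fixed point. -/
def MemLCFG (L : Type*) [PartialOrder L] : Prop :=
  ∃ (V : Type) (_ : Finite V) (E : V → V → ℕ) (O : V → ℕ),
    ReachesUFP E O ∧ Generates E O L

/-- `L` is generated by some Abelian Sandpile Model reaching a unique fixed point. -/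
def MemLASM (L : Type*) [PartialOrder L] : Prop :=
  ∃ (V : Type) (_ : Finite V) (E : V → V → ℕ) (O : V → ℕ),
    IsASM E ∧ ReachesUFP E O ∧ Generates E O L

section Latticedefs

variable {L : Type*} [Lattice L]

/-- `m` is meet-irreducible: it has exactly one upper cover. -/
def MeetIrred (m : L) : Prop := ∃! y, m ⋖ y

/-- `j` is join-irreducible: it has exactly one lower cover. -/
def JoinIrred (j : L) : Prop := ∃! y, y ⋖ j

/-- The set `M_x \ M_y` of meet-irreducibles above `x` but not above `y`. -/
def MsetDiff (x y : L) : Set L := {m | MeetIrred m ∧ x ≤ m ∧ ¬ y ≤ m}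

/-- The set `M \ M_a` of meet-irreducibles not above `a`. -/
def MnotAbove (a : L) : Set L := {m | MeetIrred m ∧ ¬ a ≤ m}

/-- `x⁺`: the join of all upper covers of `x`. -/
noncomputable def uplus [Fintype L] [OrderBot L] (x : L) : L :=
  Finset.univ.sup (fun y => if x ⋖ y then y else ⊥)

/-- `L` is upper locally distributive: for every `x ≠ ⊤` the interval `[x, x⁺]`
is isomorphic to a Boolean lattice (a hypercube). -/
def IsULD (L : Type*) [Lattice L] [Fintype L] [BoundedOrder L] : Prop :=
  ∀ x : L, x ≠ ⊤ → ∃ n : ℕ, Nonempty (↥(Set.Icc x (uplus x)) ≃o Set (Fin n))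

/-- `𝔘_m`: the minimal elements of `{x : ∃ y, x ⋖ y and 𝔪(x,y) = m}`. -/
def Uset (m : L) : Set L :=
  {x | Minimal (fun z => ∃ y, z ⋖ y ∧ MsetDiff z y = {m}) x}

/-- `𝔏_m`: the maximal elements of `{x : a ≰ x for every a ∈ 𝔘_m}`. -/
def Lset (m : L) : Set L :=
  {x | Maximal (fun z => ∀ a ∈ Uset m, ¬ a ≤ z) x}

/-- `(w, e)` is a (non-negative integer) solution of the system `E(m)`. -/
def SolvesE [OrderBot L] (m : L) (w : ℕ) (e : L → ℕ) : Prop :=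
  (Uset m = {(⊥ : L)} → 1 ≤ w) ∧
  (Uset m ≠ {(⊥ : L)} →
    (∀ a ∈ Lset m, (∑ᶠ x ∈ MnotAbove a, e x) < w) ∧
    (∀ a ∈ Uset m, w ≤ ∑ᶠ x ∈ MnotAbove a, e x))

/-- The system `E(m)` has a non-negative integer solution. -/
def HasSolE [OrderBot L] (m : L) : Prop := ∃ w e, SolvesE m w e

/-- The variable `e_{x,m}` occurs in the system `𝔈(m)`. -/
def VarOccurs [OrderBot L] (x m : L) : Prop :=
  MeetIrred m ∧ Uset m ≠ {(⊥ : L)} ∧ ∃ a ∈ Uset m ∪ Lset m, x ∈ MnotAbove a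

/-- `(W, Ee)` is a non-negative integer solution of the system `Ω`. -/
def SolvesOmega [OrderBot L] (W : L → ℕ) (Ee : L → L → ℕ) : Prop :=
  (∀ m : L, MeetIrred m → SolvesE m (W m) (fun x => Ee x m)) ∧
  (∀ m₁ m₂ : L, m₁ ≠ m₂ → VarOccurs m₁ m₂ → VarOccurs m₂ m₁ → Ee m₁ m₂ = Ee m₂ m₁)

/-- The edge relation of the directed graph `𝒢` on the meet-irreducibles. -/
def Gedge (m₁ m₂ : L) : Prop :=
  MeetIrred m₁ ∧ MeetIrred m₂ ∧ ∃ a ∈ Uset m₂, m₁ ∈ MnotAbove a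

end Latticedefs

/-- The system `Ω` has a non-negative integer solution. -/
def HasSolOmega (L : Type*) [Lattice L] [OrderBot L] : Prop :=
  ∃ W Ee, SolvesOmega (L := L) W Ee

/-- The directed graph `𝒢` on the meet-irreducibles is acyclic. -/
def GAcyclic (L : Type*) [Lattice L] : Prop :=
  ∀ m : L, ¬ Relation.TransGen (Gedge (L := L)) m m

section FiringCounts

variable {V : Type*}

/-- The number of occurrences of `v` in the firing sequence `l`. -/
noncomputable def firingCount (l : List V) (v : V) : ℕ := l.count v

lemma firingCount_nil (v : V) : firingCount ([] : List V) v = 0 := by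
  simp [firingCount]

lemma firingCount_append (l t : List V) (v : V) :
    firingCount (l ++ t) v = firingCount l v + firingCount t v := by
  simp [firingCount]

lemma firingCount_cons (a : V) (l : List V) (v : V) :
    firingCount (a :: l) v = firingCount l v + if v = a then 1 else 0 := by
  simp [firingCount, List.count_cons, eq_comm (a := a)]

lemma firingCount_concat (l : List V) (a v : V) :
    firingCount (l ++ [a]) v = firingCount l v + if v = a then 1 else 0 := by
  rw [firingCount_append, firingCount_cons, firingCount_nil, zero_add]

lemma nodup_of_firingCount_le_one {l : List V} (h : ∀ v, firingCount l v ≤ 1) : l.Nodup :=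
  List.nodup_iff_count_le_one.mpr h

lemma validSeq_append (E : V → V → ℕ) (c : V → ℕ) (l t : List V) :
    ValidSeq E c (l ++ t) ↔ ValidSeq E c l ∧ ValidSeq E (fireList E c l) t := by
  induction l generalizing c with
  | nil => simp [ValidSeq, fireList]
  | cons a l ih => simp [ValidSeq, fireList, ih, and_assoc]

lemma fireList_append (E : V → V → ℕ) (c : V → ℕ) (l t : List V) :
    fireList E c (l ++ t) = fireList E (fireList E c l) t := by
  induction l generalizing c with
  | nil => simp [fireList]
  | cons a l ih => simp [fireList, ih]

lemma validSeq_concat (E : V → V → ℕ) (c : V → ℕ) (l : List V) (v : V) :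
    ValidSeq E c (l ++ [v]) ↔ ValidSeq E c l ∧ Firable E (fireList E c l) v := by
  simp [validSeq_append, ValidSeq]

lemma firingCount_sink {E : V → V → ℕ} {s : V} (hs : IsSink E s) {c : V → ℕ} {l : List V}
    (hl : ValidSeq E c l) : firingCount l s = 0 := by
  induction l generalizing c with
  | nil => exact firingCount_nil s
  | cons a l ih =>
    have hne : s ≠ a := fun h => hl.1.1 (h ▸ hs)
    rw [firingCount_cons, ih hl.2, if_neg hne]

lemma outDeg_eq_sum [Fintype V] (E : V → V → ℕ) (v : V) : outDeg E v = ∑ u, E v u :=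
  finsum_eq_sum_of_fintype _

lemma loops_le_outDeg [Fintype V] (E : V → V → ℕ) (v : V) : E v v ≤ outDeg E v := by
  rw [outDeg_eq_sum]
  exact Finset.single_le_sum (f := fun u => E v u) (fun _ _ => Nat.zero_le _) (Finset.mem_univ v)

/-- The configuration reached depends only on the firing counts. -/
lemma fireList_apply [Fintype V] (E : V → V → ℕ) {c : V → ℕ} {l : List V}
    (hl : ValidSeq E c l) (v : V) :
    (fireList E c l v : ℤ) =
      c v + ∑ u, (firingCount l u : ℤ) * E u v - firingCount l v * outDeg E v := by
  induction l generalizing c with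
  | nil => simp [fireList, firingCount_nil]
  | cons a l ih =>
    have hfire : (fire E c a v : ℤ) = c v + E a v - if v = a then (outDeg E v : ℤ) else 0 := by
      by_cases hva : v = a
      · subst hva
        have hle := hl.1.2
        simp only [fire, if_true]
        omega
      · simp [fire, hva]
    rw [fireList, ih hl.2, hfire]
    simp only [firingCount_cons]
    push_cast
    simp only [add_mul, Finset.sum_add_distrib, ite_mul, one_mul, zero_mul,
      Finset.sum_ite_eq', Finset.mem_univ, if_true]
    ring

lemma fireList_eq_of_firingCount_eq [Fintype V] {E : V → V → ℕ} {c : V → ℕ} {l t : List V}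
    (hl : ValidSeq E c l) (ht : ValidSeq E c t) (h : ∀ v, firingCount l v = firingCount t v) :
    fireList E c l = fireList E c t := by
  funext v
  have := fireList_apply E hl v
  simp only [h] at this
  rw [← fireList_apply E ht v] at this
  exact_mod_cast this

/-- A firing sequence leading to a fixed point dominates every valid firing sequence. -/
lemma firingCount_le_of_fixedPt [Fintype V] {E : V → V → ℕ} {c : V → ℕ} {l t : List V}
    (hl : ValidSeq E c l) (hfix : FixedPt E (fireList E c l)) (ht : ValidSeq E c t) (v : V) :
    firingCount t v ≤ firingCount l v := by
  induction t using List.reverseRecOn generalizing v with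
  | nil => simp [firingCount_nil]
  | append_singleton t a ih =>
    rw [validSeq_concat] at ht
    obtain ⟨ht, hfa⟩ := ht
    rw [firingCount_concat]
    by_cases hva : v = a
    · subst hva
      rw [if_pos rfl]
      by_contra hlt
      have heq : firingCount t v = firingCount l v := by have := ih ht v; omega
      refine hfix v ⟨hfa.1, hfa.2.trans ?_⟩
      have hsum : ∑ u, (firingCount t u : ℤ) * E u v ≤ ∑ u, (firingCount l u : ℤ) * E u v :=
        Finset.sum_le_sum fun u _ => by have := ih ht u; gcongr
      have h₁ := fireList_apply E ht v
      have h₂ := fireList_apply E hl v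
      rw [heq] at h₁
      omega
    · rw [if_neg hva]
      exact ih ht v

/-- When a unique fixed point is reached, a configuration determines the firing counts. -/
lemma firingCount_eq_of_fireList_eq [Fintype V] {E : V → V → ℕ} {O : V → ℕ}
    (hUFP : ReachesUFP E O) {l t : List V} (hl : ValidSeq E O l) (ht : ValidSeq E O t)
    (h : fireList E O l = fireList E O t) (v : V) : firingCount l v = firingCount t v := by
  obtain ⟨fp, -, hfix, hall⟩ := hUFP
  obtain ⟨r, hr, hrfp⟩ := hall _ ⟨l, hl, rfl⟩
  have hlr : ValidSeq E O (l ++ r) := (validSeq_append E O l r).mpr ⟨hl, hr⟩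
  have htr : ValidSeq E O (t ++ r) := (validSeq_append E O t r).mpr ⟨ht, h ▸ hr⟩
  have hlfix : FixedPt E (fireList E O (l ++ r)) := by rwa [fireList_append, hrfp]
  have htfix : FixedPt E (fireList E O (t ++ r)) := by rwa [fireList_append, ← h, hrfp]
  have h₁ := firingCount_le_of_fixedPt hlr hlfix htr v
  have h₂ := firingCount_le_of_fixedPt htr htfix hlr v
  simp only [firingCount_append] at h₁ h₂
  omega

lemma firable_fireList_iff [Fintype V] {E : V → V → ℕ} {O : V → ℕ} {l : List V}
    (hl : ValidSeq E O l) (v : V) :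
    Firable E (fireList E O l) v ↔ ¬ IsSink E v ∧
      (outDeg E v : ℤ) ≤
        O v + ∑ u, (firingCount l u : ℤ) * E u v - firingCount l v * outDeg E v := by
  rw [Firable, ← fireList_apply E hl v, Nat.cast_le]

end FiringCounts

/-- A relation that is total and functional in both directions is the graph of an equivalence. -/
lemma exists_equiv_of_rel {α β : Type*} (R : α → β → Prop) (hl : ∀ a, ∃ b, R a b)
    (hr : ∀ b, ∃ a, R a b) (hf : ∀ a b b', R a b → R a b' → b = b')
    (hi : ∀ a a' b, R a b → R a' b → a = a') : ∃ g : α ≃ β, ∀ a, R a (g a) := by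
  choose g hg using hl
  refine ⟨Equiv.ofBijective g ⟨fun a a' h => hi a a' (g a) (hg a) (h ▸ hg a'), fun b => ?_⟩, hg⟩
  obtain ⟨a, ha⟩ := hr b
  exact ⟨a, hf a _ _ (hg a) ha⟩

section Bisimulation

variable {V W : Type*} {E : V → V → ℕ} {O : V → ℕ} {E' : W → W → ℕ} {O' : W → ℕ}
  {S : List V → List W → Prop}

/-- A simulation of single firings extends to a simulation of firing sequences. -/
lemma extend_of_step (hstep : ∀ l l' v, S l l' → Firable E (fireList E O l) v →
      ∃ w, S (l ++ [v]) (l' ++ [w]))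
    {l : List V} {l' : List W} (h : S l l') (t : List V) (ht : ValidSeq E (fireList E O l) t) :
    ∃ t', S (l ++ t) (l' ++ t') := by
  induction t generalizing l l' with
  | nil => exact ⟨[], by simpa using h⟩
  | cons v t ih =>
    obtain ⟨w, hw⟩ := hstep l l' v h ht.1
    obtain ⟨t', ht'⟩ := ih hw (by rw [fireList_append]; exact ht.2)
    exact ⟨w :: t', by simpa using ht'⟩

/-- Firing games related step by step through firing sequences, with related sequences having
firing counts that determine each other, have the same configuration space. -/
theorem equivalent_of_bisimulation [Fintype V] [Fintype W] (hUFP : ReachesUFP E O)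
    (hnil : S [] [])
    (hvalid : ∀ l l', S l l' → ValidSeq E O l)
    (hvalid' : ∀ l l', S l l' → ValidSeq E' O' l')
    (hfwd : ∀ l l' v, S l l' → Firable E (fireList E O l) v → ∃ w, S (l ++ [v]) (l' ++ [w]))
    (hbwd : ∀ l l' w, S l l' → Firable E' (fireList E' O' l') w → ∃ v, S (l ++ [v]) (l' ++ [w]))
    (hcount : ∀ l₁ l₂ l₁' l₂', S l₁ l₁' → S l₂ l₂' →
      ((∀ v, firingCount l₁ v = firingCount l₂ v) ↔
        ∀ w, firingCount l₁' w = firingCount l₂' w)) :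
    ReachesUFP E' O' ∧ ∃ g : {c : V → ℕ // Reaches E O c} ≃ {c : W → ℕ // Reaches E' O' c},
      ∀ a b : {c : V → ℕ // Reaches E O c},
        Reaches E a.val b.val ↔ Reaches E' (g a).val (g b).val := by
  have hfwd' : ∀ {l l'}, S l l' → ∀ t, ValidSeq E (fireList E O l) t →
      ∃ t', S (l ++ t) (l' ++ t') := fun h t ht => extend_of_step hfwd h t ht
  have hbwd' : ∀ {l l'}, S l l' → ∀ t', ValidSeq E' (fireList E' O' l') t' →
      ∃ t, S (l ++ t) (l' ++ t') := fun {l l'} h t' ht' =>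
    extend_of_step (S := fun a b => S b a) (fun a b w hab hw => hbwd b a w hab hw) h t' ht'
  have hUFP' : ReachesUFP E' O' := by
    obtain ⟨fp, ⟨l, hl, hlfp⟩, hfix, hall⟩ := hUFP
    obtain ⟨l', hll'⟩ := hfwd' hnil l hl
    simp only [List.nil_append] at hll'
    refine ⟨fireList E' O' l', ⟨l', hvalid' _ _ hll', rfl⟩, fun w hw => ?_, ?_⟩
    · obtain ⟨v, hv⟩ := hbwd l l' w hll' hw
      exact hfix v (hlfp ▸ ((validSeq_concat E O l v).mp (hvalid _ _ hv)).2)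
    · rintro _ ⟨m', hm', rfl⟩
      obtain ⟨m, hmm'⟩ := hbwd' hnil m' hm'
      simp only [List.nil_append] at hmm'
      obtain ⟨t, ht, htfp⟩ := hall _ ⟨m, hvalid _ _ hmm', rfl⟩
      obtain ⟨t', ht'⟩ := hfwd' hmm' t ht
      refine ⟨t', ((validSeq_append E' O' m' t').mp (hvalid' _ _ ht')).2, ?_⟩
      rw [← fireList_append]
      refine fireList_eq_of_firingCount_eq (hvalid' _ _ ht') (hvalid' _ _ hll') ?_
      refine (hcount _ _ _ _ ht' hll').mp fun v => ?_
      exact firingCount_eq_of_fireList_eq ⟨fp, ⟨l, hl, hlfp⟩, hfix, hall⟩ (hvalid _ _ ht') hl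
        (by rw [fireList_append, htfp, hlfp]) v
  refine ⟨hUFP', ?_⟩
  have hiff : ∀ {l₁ l₁' l₂ l₂'}, S l₁ l₁' → S l₂ l₂' →
      (fireList E O l₁ = fireList E O l₂ ↔ fireList E' O' l₁' = fireList E' O' l₂') := by
    intro l₁ l₁' l₂ l₂' h₁ h₂
    constructor <;> intro h
    · exact fireList_eq_of_firingCount_eq (hvalid' _ _ h₁) (hvalid' _ _ h₂)
        ((hcount _ _ _ _ h₁ h₂).mp
          (firingCount_eq_of_fireList_eq hUFP (hvalid _ _ h₁) (hvalid _ _ h₂) h))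
    · exact fireList_eq_of_firingCount_eq (hvalid _ _ h₁) (hvalid _ _ h₂)
        ((hcount _ _ _ _ h₁ h₂).mpr
          (firingCount_eq_of_fireList_eq hUFP' (hvalid' _ _ h₁) (hvalid' _ _ h₂) h))
  obtain ⟨g, hg⟩ := exists_equiv_of_rel
    (fun (a : {c : V → ℕ // Reaches E O c}) (b : {c : W → ℕ // Reaches E' O' c}) =>
      ∃ l l', S l l' ∧ fireList E O l = a.val ∧ fireList E' O' l' = b.val)
    (by
      rintro ⟨_, l, hl, rfl⟩
      obtain ⟨l', h⟩ := hfwd' hnil l hl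
      simp only [List.nil_append] at h
      exact ⟨⟨_, l', hvalid' _ _ h, rfl⟩, l, l', h, rfl, rfl⟩)
    (by
      rintro ⟨_, l', hl', rfl⟩
      obtain ⟨l, h⟩ := hbwd' hnil l' hl'
      simp only [List.nil_append] at h
      exact ⟨⟨_, l, hvalid _ _ h, rfl⟩, l, l', h, rfl, rfl⟩)
    (by
      rintro a b b' ⟨l₁, l₁', h₁, ha₁, hb₁⟩ ⟨l₂, l₂', h₂, ha₂, hb₂⟩
      exact Subtype.ext (hb₁ ▸ hb₂ ▸ (hiff h₁ h₂).mp (ha₁.trans ha₂.symm)))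
    (by
      rintro a a' b ⟨l₁, l₁', h₁, ha₁, hb₁⟩ ⟨l₂, l₂', h₂, ha₂, hb₂⟩
      exact Subtype.ext (ha₁ ▸ ha₂ ▸ (hiff h₁ h₂).mpr (hb₁.trans hb₂.symm)))
  refine ⟨g, fun a b => ?_⟩
  obtain ⟨l₁, l₁', h₁, ha₁, hb₁⟩ := hg a
  obtain ⟨l₂, l₂', h₂, ha₂, hb₂⟩ := hg b
  constructor
  · rintro ⟨t, ht, hab⟩
    rw [← ha₁] at ht hab
    obtain ⟨t', h⟩ := hfwd' h₁ t ht
    rw [← hb₁, ← hb₂]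
    refine ⟨t', ((validSeq_append E' O' l₁' t').mp (hvalid' _ _ h)).2, ?_⟩
    rw [← fireList_append]
    exact (hiff h h₂).mp (by rw [fireList_append, hab, ha₂])
  · rintro ⟨t', ht', hab⟩
    rw [← hb₁] at ht' hab
    obtain ⟨t, h⟩ := hbwd' h₁ t' ht'
    rw [← ha₁, ← ha₂]
    refine ⟨t, ((validSeq_append E O l₁ t).mp (hvalid _ _ h)).2, ?_⟩
    rw [← fireList_append]
    exact (hiff h h₂).mpr (by rw [fireList_append, hab, hb₂])

end Bisimulation

section Unfolding

variable {V A : Type*} (E : V → V → ℕ) (O : V → ℕ) (e : A ≃ V) (M N D : ℕ)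

/-- The multiplicity of the edges between distinct non-sink vertices, zero elsewhere. -/
noncomputable def interiorEdge (u v : V) : ℕ :=
  if u = v ∨ IsSink E u ∨ IsSink E v then 0 else E u v

/-- Edges between the copies of the vertices: distinct copies of one vertex are joined by `N`
edges, copies of distinct vertices inherit the edges of the original graph. -/
noncomputable def copyEdge (p q : A × Fin M) : ℕ :=
  if p = q then 0 else if p.1 = q.1 then N else interiorEdge E (e p.1) (e q.1)

/-- The graph on `M` copies of every vertex and a new sink `none`, in which every copy has
out-degree `D`. -/
noncomputable def unfoldEdge [Fintype A] : Option (A × Fin M) → Option (A × Fin M) → ℕ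
  | none, _ => 0
  | some p, none => D - ∑ q, copyEdge E e M N p q
  | some p, some q => copyEdge E e M N p q

/-- The initial configuration in which the copy `i` of a vertex becomes firable exactly when the
original vertex is firable for the time `i + 1`. -/
noncomputable def unfoldInit : Option (A × Fin M) → ℕ
  | none => 0
  | some (a, i) => if IsSink E (e a) then 0 else
      D + O (e a) - (i * N + outDeg E (e a) + i * (outDeg E (e a) - E (e a) (e a)))

/-- The firing sequence `l'` in the unfolded graph fires the first `firingCount l v` copies of
each vertex `v`, once each. -/
def Unfolds (l : List V) (l' : List (Option (A × Fin M))) : Prop :=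
  ∀ p : A × Fin M,
    firingCount l' (some p) = if (p.2 : ℕ) < firingCount l (e p.1) then 1 else 0

variable {E O e M N D}

lemma copyEdge_comm (h : ∀ u v, interiorEdge E u v = interiorEdge E v u) (p q : A × Fin M) :
    copyEdge E e M N p q = copyEdge E e M N q p := by
  simp only [copyEdge, eq_comm (a := p), eq_comm (a := p.1), h (e p.1)]

lemma outDeg_unfoldEdge_some [Fintype A] {p : A × Fin M}
    (h : ∑ q, copyEdge E e M N p q < D) : outDeg (unfoldEdge E e M N D) (some p) = D := by
  rw [outDeg_eq_sum, Fintype.sum_option]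
  simp only [unfoldEdge]
  omega

lemma isSink_unfoldEdge_none [Fintype A] : IsSink (unfoldEdge E e M N D) none := by
  rw [IsSink, outDeg_eq_sum]
  simp [unfoldEdge]

lemma not_isSink_unfoldEdge_some [Fintype A] {p : A × Fin M}
    (h : ∑ q, copyEdge E e M N p q < D) : ¬ IsSink (unfoldEdge E e M N D) (some p) := by
  rw [IsSink, outDeg_unfoldEdge_some h]
  simp only [unfoldEdge, copyEdge, if_true]
  omega

lemma isASM_unfoldEdge [Fintype A] (hsymm : ∀ u v, interiorEdge E u v = interiorEdge E v u)
    (h : ∀ p, ∑ q, copyEdge E e M N p q < D) : IsASM (unfoldEdge E e M N D) := by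
  have hpos : ∀ p, 0 < unfoldEdge E e M N D (some p) none := fun p => by
    have := h p
    simp only [unfoldEdge]
    omega
  have hto : ∀ x, Relation.ReflTransGen
      (fun a b => 0 < unfoldEdge E e M N D a b ∨ 0 < unfoldEdge E e M N D b a) x none
    | none => .refl
    | some p => .single (Or.inl (hpos p))
  have hfrom : ∀ x, Relation.ReflTransGen
      (fun a b => 0 < unfoldEdge E e M N D a b ∨ 0 < unfoldEdge E e M N D b a) none x
    | none => .refl
    | some p => .single (Or.inr (hpos p))
  refine ⟨fun u v => (hto u).trans (hfrom v), none, isSink_unfoldEdge_none, ?_, ?_⟩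
  · rintro (_ | p) hp
    · rfl
    · exact absurd hp (not_isSink_unfoldEdge_some (h p))
  · rintro (_ | p) (_ | q) - hp hq
    · rfl
    · exact absurd rfl hp
    · exact absurd rfl hq
    · exact copyEdge_comm hsymm p q

lemma sum_fin_ite_lt (c : ℤ) {n : ℕ} (hn : n ≤ M) :
    ∑ i : Fin M, (if (i : ℕ) < n then c else 0) = n * c := by
  rw [Fin.sum_univ_eq_sum_range (fun i => if i < n then c else 0), ← Finset.sum_filter]
  have : (Finset.range M).filter (· < n) = Finset.range n := by
    ext i
    simp only [Finset.mem_filter, Finset.mem_range]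
    omega
  simp [this]

/-- The number of chips received by a copy when initial segments of the copies have fired. -/
lemma sum_copyEdge [Fintype V] [Fintype A] {n : V → ℕ} (hn : ∀ v, n v ≤ M) (b : A) (j : Fin M) :
    ∑ q : A × Fin M, ((if (q.2 : ℕ) < n (e q.1) then 1 else 0 : ℕ) : ℤ) *
        copyEdge E e M N q (b, j) =
      ∑ u, (n u : ℤ) * interiorEdge E u (e b) +
        N * (n (e b) - if (j : ℕ) < n (e b) then 1 else 0) := by
  have hinner : ∀ a : A, ∑ i : Fin M, ((if (i : ℕ) < n (e a) then 1 else 0 : ℕ) : ℤ) *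
        copyEdge E e M N (a, i) (b, j) =
      (n (e a) : ℤ) * interiorEdge E (e a) (e b) +
        if a = b then (N * (n (e b) - if (j : ℕ) < n (e b) then 1 else 0) : ℤ) else 0 := by
    intro a
    by_cases hab : a = b
    · subst hab
      have hterm : ∀ i : Fin M, ((if (i : ℕ) < n (e a) then 1 else 0 : ℕ) : ℤ) *
          copyEdge E e M N (a, i) (a, j) =
          (if (i : ℕ) < n (e a) then (N : ℤ) else 0) -
            if i = j then (if (j : ℕ) < n (e a) then (N : ℤ) else 0) else 0 := by
        intro i
        by_cases hij : i = j
        · subst hij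
          simp [copyEdge]
        · simp [copyEdge, hij]
      simp only [hterm, Finset.sum_sub_distrib, sum_fin_ite_lt _ (hn _), Finset.sum_ite_eq',
        Finset.mem_univ, if_true, interiorEdge, true_or]
      split_ifs <;> push_cast <;> ring
    · have hterm : ∀ i : Fin M, ((if (i : ℕ) < n (e a) then 1 else 0 : ℕ) : ℤ) *
          copyEdge E e M N (a, i) (b, j) =
          if (i : ℕ) < n (e a) then (interiorEdge E (e a) (e b) : ℤ) else 0 := by
        intro i
        simp [copyEdge, hab]
      simp only [hterm, sum_fin_ite_lt _ (hn _), if_neg hab, add_zero]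
  rw [Fintype.sum_prod_type]
  simp only [hinner, Finset.sum_add_distrib, Finset.sum_ite_eq', Finset.mem_univ, if_true]
  rw [Equiv.sum_comp e fun u => (n u : ℤ) * interiorEdge E u (e b)]

lemma sum_interiorEdge [Fintype V] {n : V → ℕ} (hn : ∀ u, IsSink E u → n u = 0) {v : V}
    (hv : ¬ IsSink E v) :
    ∑ u, (n u : ℤ) * E u v = ∑ u, (n u : ℤ) * interiorEdge E u v + n v * E v v := by
  have hterm : ∀ u, (n u : ℤ) * E u v =
      n u * interiorEdge E u v + if u = v then (n v * E v v : ℤ) else 0 := by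
    intro u
    by_cases huv : u = v
    · subst huv
      simp [interiorEdge]
    · by_cases hu : IsSink E u
      · simp [hn u hu, huv]
      · simp [interiorEdge, huv, hu, hv]
  rw [Finset.sum_congr rfl fun u _ => hterm u, Finset.sum_add_distrib, Finset.sum_ite_eq',
    if_pos (Finset.mem_univ v)]

/-- A copy is firable exactly when it is the next copy of a firable vertex. -/
lemma firable_unfoldEdge_iff [Fintype V] [Fintype A]
    (hN : ∀ v, O v + ∑ u, M * E u v < N)
    (hD : ∀ v, M * N + outDeg E v + M * outDeg E v + O v + ∑ u, M * E u v < D)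
    (hD' : ∀ p, ∑ q, copyEdge E e M N p q < D)
    {l : List V} {l' : List (Option (A × Fin M))} (hl : ValidSeq E O l)
    (hl' : ValidSeq (unfoldEdge E e M N D) (unfoldInit E O e M N D) l')
    (hM : ∀ v, firingCount l v < M) (hll' : Unfolds e M l l') (b : A) (j : Fin M) :
    Firable (unfoldEdge E e M N D)
        (fireList (unfoldEdge E e M N D) (unfoldInit E O e M N D) l') (some (b, j)) ↔
      (j : ℕ) = firingCount l (e b) ∧ Firable E (fireList E O l) (e b) := by
  rw [firable_fireList_iff hl', firable_fireList_iff hl, outDeg_unfoldEdge_some (hD' _),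
    Fintype.sum_option, firingCount_sink isSink_unfoldEdge_none hl']
  simp only [not_isSink_unfoldEdge_some (hD' _), not_false_eq_true, true_and, hll' _, unfoldEdge,
    Nat.cast_zero, zero_mul, zero_add]
  rw [sum_copyEdge fun v => (hM v).le]
  have hSnonneg : (0 : ℤ) ≤ ∑ u, (firingCount l u : ℤ) * interiorEdge E u (e b) := by positivity
  have hS : ∑ u, (firingCount l u : ℤ) * interiorEdge E u (e b) ≤
      ((∑ u, M * E u (e b) : ℕ) : ℤ) := by
    push_cast
    refine Finset.sum_le_sum fun u _ => ?_
    have h₁ : interiorEdge E u (e b) ≤ E u (e b) := by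
      rw [interiorEdge]; split_ifs <;> simp
    have h₂ := (hM u).le
    gcongr
  have hN := hN (e b)
  have hD := hD (e b)
  have hloop := loops_le_outDeg E (e b)
  have hn := hM (e b)
  have hj := j.isLt
  by_cases hs : IsSink E (e b)
  · have hn0 := firingCount_sink hs hl
    have hS0 : ∑ u, (firingCount l u : ℤ) * interiorEdge E u (e b) = 0 :=
      Finset.sum_eq_zero fun u _ => by simp [interiorEdge, hs]
    simp only [unfoldInit, hs, hn0, hS0]
    simp
    omega
  · rw [sum_interiorEdge (fun u hu => firingCount_sink hu hl) hs]
    simp only [unfoldInit, hs, if_false, not_false_eq_true, true_and]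
    generalize (∑ u, (firingCount l u : ℤ) * interiorEdge E u (e b)) = S at *
    generalize (∑ u, M * E u (e b)) = B at *
    generalize firingCount l (e b) = n at *
    generalize hk : outDeg E (e b) = d at *
    generalize E (e b) (e b) = r at *
    generalize O (e b) = o at *
    obtain ⟨k, rfl⟩ := Nat.exists_eq_add_of_le hloop
    obtain ⟨i, hi⟩ := j
    simp only [Nat.add_sub_cancel_left] at *
    have h₁ : i * N ≤ M * N := by gcongr
    have h₂ : i * k ≤ M * (r + k) := Nat.mul_le_mul hj.le (by omega)
    have h₃ : n * N ≤ M * N := by gcongr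
    rw [Nat.cast_sub (by omega)]
    push_cast
    rcases lt_trichotomy i n with hlt | rfl | hgt
    · simp only [hlt, if_true, hlt.ne, false_and, iff_false]
      zify at *
      nlinarith
    · simp only [lt_irrefl, if_false, true_and]
      constructor <;> intro h <;> linarith
    · simp only [hgt.not_gt, if_false, hgt.ne', false_and, iff_false]
      have h₄ : (n + 1) * N ≤ i * N := by gcongr; omega
      zify at *
      nlinarith

lemma Unfolds.concat {l : List V} {l' : List (Option (A × Fin M))} (h : Unfolds e M l l') {b : A}
    {j : Fin M} (hj : (j : ℕ) = firingCount l (e b)) :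
    Unfolds e M (l ++ [e b]) (l' ++ [some (b, j)]) := by
  rintro ⟨a, i⟩
  rw [firingCount_concat, firingCount_concat, h]
  by_cases hab : a = b
  · subst hab
    simp only [if_true, Option.some.injEq, Prod.mk.injEq, true_and, Fin.ext_iff]
    split_ifs <;> omega
  · simp [hab]

lemma Unfolds.firingCount_eq_iff {l₁ l₂ : List V} {l₁' l₂' : List (Option (A × Fin M))}
    (h₁ : Unfolds e M l₁ l₁') (h₂ : Unfolds e M l₂ l₂') (hM₁ : ∀ v, firingCount l₁ v < M)
    (hM₂ : ∀ v, firingCount l₂ v < M) (hnone : firingCount l₁' none = firingCount l₂' none) :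
    (∀ v, firingCount l₁ v = firingCount l₂ v) ↔
      ∀ w, firingCount l₁' w = firingCount l₂' w := by
  constructor
  · rintro h (_ | p)
    · exact hnone
    · rw [h₁, h₂, h]
  · intro h v
    have key : ∀ i : Fin M, (i : ℕ) < firingCount l₁ v ↔ (i : ℕ) < firingCount l₂ v := by
      intro i
      have := h (some (e.symm v, i))
      rw [h₁, h₂, e.apply_symm_apply] at this
      dsimp only at this
      split_ifs at this <;> omega
    have k₁ := key ⟨_, hM₁ v⟩
    have k₂ := key ⟨_, hM₂ v⟩
    simp only at k₁ k₂
    omega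

end Unfolding

/-- every ASM reaching a unique fixed point is equivalent to a simple
ASM: there is a simple ASM whose configuration space is order-isomorphic to that of
the given one. -/
theorem stmt13 {V : Type*} [Finite V] (E : V → V → ℕ) (O : V → ℕ)
    (hASM : IsASM E) (hUFP : ReachesUFP E O) :
    ∃ (V' : Type) (_ : Finite V') (E' : V' → V' → ℕ) (O' : V' → ℕ),
      IsASM E' ∧ ReachesUFP E' O' ∧ SimpleCFG E' O' ∧
      ∃ g : {c : V → ℕ // Reaches E O c} ≃ {c : V' → ℕ // Reaches E' O' c},
        ∀ a b : {c : V → ℕ // Reaches E O c},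
          Reaches E a.val b.val ↔ Reaches E' (g a).val (g b).val := by
  obtain ⟨lfp, hlfp, hfix⟩ : ∃ l, ValidSeq E O l ∧ FixedPt E (fireList E O l) := by
    obtain ⟨fp, ⟨l, hl, rfl⟩, hfix, -⟩ := hUFP
    exact ⟨l, hl, hfix⟩
  obtain ⟨k, ⟨e'⟩⟩ := Finite.exists_equiv_fin V
  let e : Fin k ≃ V := e'.symm
  have : Fintype V := Fintype.ofFinite V
  obtain ⟨M, hMdef⟩ : ∃ M, M = lfp.length + 1 := ⟨_, rfl⟩
  have hM : ∀ l, ValidSeq E O l → ∀ v, firingCount l v < M := fun l hl v =>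
    hMdef ▸ Nat.lt_succ_of_le ((firingCount_le_of_fixedPt hlfp hfix hl v).trans List.count_le_length)
  obtain ⟨N, hN⟩ : ∃ N, ∀ v, O v + ∑ u, M * E u v < N := by
    obtain ⟨N, hN⟩ := (Set.finite_range fun v => O v + ∑ u, M * E u v).bddAbove
    exact ⟨N + 1, fun v => Nat.lt_succ_of_le (hN ⟨v, rfl⟩)⟩
  obtain ⟨D, hD, hD'⟩ : ∃ D,
      (∀ v, M * N + outDeg E v + M * outDeg E v + O v + ∑ u, M * E u v < D) ∧
      ∀ p, ∑ q, copyEdge E e M N p q < D := by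
    obtain ⟨D₁, hD₁⟩ := (Set.finite_range fun v =>
      M * N + outDeg E v + M * outDeg E v + O v + ∑ u, M * E u v).bddAbove
    obtain ⟨D₂, hD₂⟩ := (Set.finite_range fun p => ∑ q, copyEdge E e M N p q).bddAbove
    exact ⟨max D₁ D₂ + 1,
      fun v => Nat.lt_succ_of_le ((hD₁ ⟨v, rfl⟩).trans (le_max_left _ _)),
      fun p => Nat.lt_succ_of_le ((hD₂ ⟨p, rfl⟩).trans (le_max_right _ _))⟩
  have hsymm : ∀ u v, interiorEdge E u v = interiorEdge E v u := by
    obtain ⟨-, s, hs, -, hE⟩ := hASM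
    intro u v
    by_cases h : u = v ∨ IsSink E u ∨ IsSink E v
    · rw [interiorEdge, interiorEdge, if_pos h, if_pos (by tauto)]
    · rw [interiorEdge, interiorEdge, if_neg h, if_neg (by tauto)]
      push Not at h
      exact hE u v h.1 (fun hu => h.2.1 (hu ▸ hs)) (fun hv => h.2.2 (hv ▸ hs))
  have hnone : ∀ {l'}, ValidSeq (unfoldEdge E e M N D) (unfoldInit E O e M N D) l' →
      firingCount l' none = 0 := fun h => firingCount_sink isSink_unfoldEdge_none h
  let S : List V → List (Option (Fin k × Fin M)) → Prop := fun l l' =>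
    ValidSeq E O l ∧ ValidSeq (unfoldEdge E e M N D) (unfoldInit E O e M N D) l' ∧
      Unfolds e M l l'
  have hnil : S [] [] := ⟨trivial, trivial, fun p => by simp [firingCount_nil]⟩
  have hbwd : ∀ l l' w, S l l' → Firable (unfoldEdge E e M N D)
      (fireList (unfoldEdge E e M N D) (unfoldInit E O e M N D) l') w →
      ∃ v, S (l ++ [v]) (l' ++ [w]) := by
    rintro l l' (_ | ⟨b, j⟩) ⟨hl, hl', hu⟩ hw
    · exact absurd isSink_unfoldEdge_none hw.1
    · obtain ⟨hj, hb⟩ := (firable_unfoldEdge_iff hN hD hD' hl hl' (hM l hl) hu b j).mp hw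
      exact ⟨e b, (validSeq_concat ..).mpr ⟨hl, hb⟩, (validSeq_concat ..).mpr ⟨hl', hw⟩,
        hu.concat hj⟩
  have hfwd : ∀ l l' v, S l l' → Firable E (fireList E O l) v →
      ∃ w, S (l ++ [v]) (l' ++ [w]) := by
    rintro l l' v ⟨hl, hl', hu⟩ hv
    obtain ⟨b, rfl⟩ := e.surjective v
    let j : Fin M := ⟨firingCount l (e b), hM l hl (e b)⟩
    exact ⟨some (b, j), (validSeq_concat ..).mpr ⟨hl, hv⟩, (validSeq_concat ..).mpr ⟨hl',
      (firable_unfoldEdge_iff hN hD hD' hl hl' (hM l hl) hu b j).mpr ⟨rfl, hv⟩⟩, hu.concat rfl⟩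
  obtain ⟨hUFP', hg⟩ := equivalent_of_bisimulation hUFP hnil (fun l l' h => h.1)
    (fun l l' h => h.2.1) hfwd hbwd (fun l₁ l₂ l₁' l₂' h₁ h₂ =>
      h₁.2.2.firingCount_eq_iff h₂.2.2 (hM _ h₁.1) (hM _ h₂.1)
        ((hnone h₁.2.1).trans (hnone h₂.2.1).symm))
  refine ⟨Option (Fin k × Fin M), inferInstance, unfoldEdge E e M N D, unfoldInit E O e M N D,
    isASM_unfoldEdge hsymm hD', hUFP', fun l' hl' _ => nodup_of_firingCount_le_one ?_, hg⟩
  obtain ⟨l, -, -, hl⟩ := extend_of_step (S := fun a b => S b a)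
    (fun a b w hab hw => hbwd b a w hab hw) hnil l' hl'
  simp only [List.nil_append] at hl
  rintro (_ | p)
  · simp [hnone hl']
  · rw [hl]
    split_ifs <;> simp
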